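/- arXiv:1206.1996 — 2 statements merged into one kernel-verified Lean document; each statement's English description precedes it below -/
import Mathlib

section
/- For k = 6, 7, 8, m(n, 2, k) = Θ(n^(3/2)); that is, there exist constants c₁, c₂ > 0 and n₀ such that for all n ≥ n₀, c₁ · n^(3/2) ≤ m(n, 2, k) ≤ c₂ · n^(3/2). -/
/-!
Upper bound: six edges forming a `K_{2,3}` span only five vertices, so for `k ≥ 6` any two
distinct vertices have at most two common neighbours. Counting paths `u - v - w` gives
`∑ d(v)² ≤ 3 n²`, and Cauchy-Schwarz turns this into `|F|² ≤ 3 n³` (`card_sq_le`).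

Lower bound: the incidence graph of the points `(x, y)` and the lines `y = s x + t` over `ZMod p`
has `2 p²` vertices, `p³` edges and no 4-cycle. A bipartite 4-cycle-free graph with at most three
vertices on one side has at most as many edges as vertices (`card_le_of_left_le_three`): each
right vertex of degree `d` contributes at least `d - 1` pairs of left neighbours, no pair is
contributed twice, and `C(a, 2) ≤ a` for `a ≤ 3`. At most eight edges spanning fewer vertices than
edges would span at most seven vertices, hence at most three on one side, a contradiction
(`card_le_of_card_le_eight`). Bertrand's postulate supplies a prime `p` with `2 p² ≤ n ≤ 8 p²`.
-/

open Finset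

/-- The combinatorial-batch-code property: `F` is a simple `r`-uniform hypergraph on
vertex set `Fin n` in which every collection of `i` distinct edges spans at least `i`
vertices, for all `1 ≤ i ≤ k`. -/
def IsBatchCode (n r k : ℕ) (F : Finset (Finset (Fin n))) : Prop :=
  (∀ e ∈ F, e.card = r) ∧
    ∀ i : ℕ, 1 ≤ i → i ≤ k → ∀ S ⊆ F, S.card = i → i ≤ (S.sup id).card

/-- `m n r k` is the maximum number of edges of a simple `r`-uniform hypergraph on `n`
vertices in which every collection of `i` distinct edges spans at least `i` vertices,
for all `1 ≤ i ≤ k`. -/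
noncomputable def m (n r k : ℕ) : ℕ :=
  sSup {c : ℕ | ∃ F : Finset (Finset (Fin n)), IsBatchCode n r k F ∧ F.card = c}

/-! ### Upper bound -/

/-- In a batch code with `k ≥ 6` two vertices have at most two common neighbours, because a
`K_{2,3}` has six edges on five vertices. -/
lemma codegree_le_two {n k : ℕ} (hk : 6 ≤ k) {F : Finset (Finset (Fin n))}
    (hF : IsBatchCode n 2 k F) {u w : Fin n} (huw : u ≠ w) :
    #{v : Fin n | ({u, v} : Finset (Fin n)) ∈ F ∧ ({w, v} : Finset (Fin n)) ∈ F} ≤ 2 := by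
  by_contra! hcon
  obtain ⟨T, hT, hT3⟩ := Finset.exists_subset_card_eq hcon
  have hmem : ∀ v ∈ T, ({u, v} : Finset (Fin n)) ∈ F ∧ ({w, v} : Finset (Fin n)) ∈ F := by
    intro v hv
    simpa using hT hv
  -- A loop `{u, u}` is a singleton, so it is not an edge.
  have hne : ∀ v ∈ T, u ≠ v ∧ w ≠ v := by
    intro v hv
    constructor
    · rintro rfl
      simpa using hF.1 _ (hmem _ hv).1
    · rintro rfl
      simpa using hF.1 _ (hmem _ hv).2
  let S : Finset (Finset (Fin n)) :=
    (({u, w} : Finset (Fin n)) ×ˢ T).image (fun q => {q.1, q.2})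
  have hinj : Set.InjOn (fun q : Fin n × Fin n => ({q.1, q.2} : Finset (Fin n)))
      (({u, w} : Finset (Fin n)) ×ˢ T : Finset (Fin n × Fin n)) := by
    rintro ⟨x, v⟩ hx ⟨x', v'⟩ hx' h
    simp only [coe_product, Set.mem_prod, mem_coe, mem_insert, mem_singleton] at hx hx'
    replace h : ({x, v} : Finset (Fin n)) = {x', v'} := h
    have h1 := hne v hx.2
    have h2 := hne v' hx'.2
    have hxm : x ∈ ({x', v'} : Finset (Fin n)) := by
      rw [← h]; simp
    have hvm : v ∈ ({x', v'} : Finset (Fin n)) := by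
      rw [← h]; simp
    simp only [mem_insert, mem_singleton] at hxm hvm
    grind
  have hScard : #S = 6 := by
    rw [Finset.card_image_of_injOn hinj, card_product, card_pair huw, hT3]
  have hSF : S ⊆ F := by
    intro e he
    simp only [S, mem_image, mem_product, mem_insert, mem_singleton, Prod.exists] at he
    obtain ⟨x, v, ⟨hx | hx, hv⟩, rfl⟩ := he
    · exact hx ▸ (hmem v hv).1
    · exact hx ▸ (hmem v hv).2
  have h6 := hF.2 6 (by norm_num) hk S hSF hScard
  have hsup : S.sup id ⊆ {u, w} ∪ T := by
    refine Finset.sup_le ?_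
    intro e he
    simp only [S, mem_image, mem_product, mem_insert, mem_singleton, Prod.exists] at he
    obtain ⟨x, v, ⟨hx, hv⟩, rfl⟩ := he
    intro y hy
    simp only [id, mem_insert, mem_singleton] at hy
    simp only [mem_union, mem_insert, mem_singleton]
    grind
  have h5 : #(({u, w} : Finset (Fin n)) ∪ T) ≤ 5 := by
    refine (card_union_le _ _).trans ?_
    rw [card_pair huw, hT3]
  have := card_le_card hsup
  omega

lemma card_sq_le {n k : ℕ} (hk : 6 ≤ k) {F : Finset (Finset (Fin n))}
    (hF : IsBatchCode n 2 k F) : #F ^ 2 ≤ 3 * n ^ 3 := by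
  classical
  let d : Fin n → ℕ := fun v => #{u : Fin n | ({u, v} : Finset (Fin n)) ∈ F}
  have hFd : #F ≤ ∑ v, d v := by
    have h1 : F ⊆ (univ.sigma fun v : Fin n =>
        ({u : Fin n | ({u, v} : Finset (Fin n)) ∈ F} : Finset (Fin n))).image
          (fun q => ({q.2, q.1} : Finset (Fin n))) := by
      intro e he
      obtain ⟨a, b, -, rfl⟩ := card_eq_two.1 (hF.1 e he)
      simp only [mem_image, mem_sigma, mem_univ, true_and, mem_filter, Sigma.exists]
      exact ⟨b, a, he, rfl⟩
    calc #F ≤ _ := card_le_card h1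
      _ ≤ _ := card_image_le
      _ = _ := by rw [card_sigma]
  have hdn : ∀ v, d v ≤ n := fun v => by
    simpa using card_le_univ ({u : Fin n | ({u, v} : Finset (Fin n)) ∈ F} : Finset (Fin n))
  -- Paths `u - v - w`, counted by their middle vertex and by their ends.
  have hdc : ∑ v, d v ^ 2 = ∑ u : Fin n, ∑ w : Fin n,
      #{v : Fin n | ({u, v} : Finset (Fin n)) ∈ F ∧ ({w, v} : Finset (Fin n)) ∈ F} := by
    have h1 : ∀ v, d v ^ 2 = ∑ u : Fin n, ∑ w : Fin n,
        if ({u, v} : Finset (Fin n)) ∈ F ∧ ({w, v} : Finset (Fin n)) ∈ F then 1 else 0 := by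
      intro v
      simp only [d, card_filter, sq, sum_mul_sum, ite_and, ite_mul, one_mul, zero_mul]
    simp only [h1, card_filter]
    rw [sum_comm]
    exact sum_congr rfl fun u _ => sum_comm
  have hrow : ∀ u : Fin n, ∑ w : Fin n,
      #{v : Fin n | ({u, v} : Finset (Fin n)) ∈ F ∧ ({w, v} : Finset (Fin n)) ∈ F} ≤ 3 * n := by
    intro u
    calc _ ≤ ∑ w : Fin n, (2 + if w = u then n else 0) := by
          refine sum_le_sum fun w _ => ?_
          split_ifs with h
          · exact (card_le_univ _).trans (by simp)
          · exact codegree_le_two hk hF (Ne.symm h)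
      _ = 3 * n := by
          simp [sum_add_distrib]; ring
  have hsq : ∑ v, d v ^ 2 ≤ 3 * n ^ 2 := by
    rw [hdc]
    calc _ ≤ ∑ u : Fin n, 3 * n := sum_le_sum fun u _ => hrow u
      _ = _ := by simp; ring
  calc #F ^ 2 ≤ (∑ v, d v) ^ 2 := Nat.pow_le_pow_left hFd 2
    _ ≤ #(univ : Finset (Fin n)) * ∑ v, d v ^ 2 := sq_sum_le_card_mul_sum_sq
    _ ≤ n * (3 * n ^ 2) := by
        rw [card_univ, Fintype.card_fin]; gcongr
    _ = _ := by ring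

/-! ### Sparsity of small bipartite graphs without 4-cycles -/

lemma le_one_add_choose_two (d : ℕ) : d ≤ 1 + d.choose 2 := by
  cases d with
  | zero => simp
  | succ d =>
    rw [Nat.choose_succ_succ' d 1]
    simp
    omega

lemma card_le_of_left_le_three {α β : Type*} [DecidableEq α] [DecidableEq β]
    (E : Finset (α × β))
    (hE : ∀ a a' b b', (a, b) ∈ E → (a', b) ∈ E → (a, b') ∈ E → (a', b') ∈ E → a = a' ∨ b = b')
    (h3 : #(E.image Prod.fst) ≤ 3) :
    #E ≤ #(E.image Prod.fst) + #(E.image Prod.snd) := by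
  let N : β → Finset α := fun b => (E.filter fun q => q.2 = b).image Prod.fst
  have hN : ∀ a b, a ∈ N b ↔ (a, b) ∈ E := by
    intro a b
    simp [N]
  have hNcard : ∀ b, #(E.filter fun q => q.2 = b) = #(N b) := by
    intro b
    refine (card_image_of_injOn ?_).symm
    rintro ⟨x, y⟩ h ⟨x', y'⟩ h' hxx
    simp at h h' hxx
    grind
  have hdisj : ((E.image Prod.snd : Finset β) : Set β).PairwiseDisjoint
      (fun b => (N b).powersetCard 2) := by
    intro b _ b' _ hbb
    refine Finset.disjoint_left.2 fun s hs hs' => ?_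
    rw [mem_powersetCard] at hs hs'
    obtain ⟨x, y, hxy, rfl⟩ := card_eq_two.1 hs.2
    have := hE x y b b' ((hN _ _).1 (hs.1 (by simp))) ((hN _ _).1 (hs.1 (by simp)))
      ((hN _ _).1 (hs'.1 (by simp))) ((hN _ _).1 (hs'.1 (by simp)))
    tauto
  have hpairs : ∑ b ∈ E.image Prod.snd, (#(N b)).choose 2 ≤ (#(E.image Prod.fst)).choose 2 := by
    simp only [← card_powersetCard]
    rw [← card_biUnion hdisj]
    refine card_le_card (biUnion_subset.2 fun b _ => powersetCard_mono ?_)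
    intro a ha
    exact mem_image.2 ⟨(a, b), (hN a b).1 ha, rfl⟩
  have hsmall : ∀ a ≤ 3, a.choose 2 ≤ a := by decide
  calc #E = ∑ b ∈ E.image Prod.snd, #(N b) := by
        rw [card_eq_sum_card_image Prod.snd E]
        exact sum_congr rfl fun b _ => hNcard b
    _ ≤ ∑ b ∈ E.image Prod.snd, (1 + (#(N b)).choose 2) :=
        sum_le_sum fun b _ => le_one_add_choose_two _
    _ = #(E.image Prod.snd) + ∑ b ∈ E.image Prod.snd, (#(N b)).choose 2 := by
        simp [sum_add_distrib]
    _ ≤ _ := by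
        have := hsmall _ h3
        omega

lemma card_le_of_card_le_eight {α β : Type*} [DecidableEq α] [DecidableEq β]
    (E : Finset (α × β))
    (hE : ∀ a a' b b', (a, b) ∈ E → (a', b) ∈ E → (a, b') ∈ E → (a', b') ∈ E → a = a' ∨ b = b')
    (h8 : #E ≤ 8) :
    #E ≤ #(E.image Prod.fst) + #(E.image Prod.snd) := by
  by_contra! hcon
  by_cases h3 : #(E.image Prod.fst) ≤ 3
  · have := card_le_of_left_le_three E hE h3
    omega
  · -- The other side has at most three vertices; exchange the two sides.
    have h := card_le_of_left_le_three (E.image Prod.swap) (by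
      intro a a' b b' h1 h2 h3 h4
      simp only [mem_image, Prod.exists, Prod.swap_prod_mk, Prod.mk.injEq] at h1 h2 h3 h4
      have := hE b b' a a'
      grind)
    simp only [image_image, card_image_of_injective _ Prod.swap_injective] at h
    have e1 : Prod.fst ∘ (Prod.swap : α × β → β × α) = Prod.snd := rfl
    have e2 : Prod.snd ∘ (Prod.swap : α × β → β × α) = Prod.fst := rfl
    rw [e1, e2] at h
    have := h (by omega)
    omega

/-! ### Lower bound -/

/-- A 4-cycle-free bipartite graph embedded in `Fin n` is a batch code for `k ≤ 8`. -/
lemma isBatchCode_of_bipartite {α β : Type*} [DecidableEq α] [DecidableEq β] {n k : ℕ}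
    (hk : k ≤ 8) (f : α ⊕ β ↪ Fin n) (I : Finset (α × β))
    (hI : ∀ a a' b b', (a, b) ∈ I → (a', b) ∈ I → (a, b') ∈ I → (a', b') ∈ I → a = a' ∨ b = b') :
    ∃ F : Finset (Finset (Fin n)), IsBatchCode n 2 k F ∧ #F = #I := by
  let g : α × β → Finset (Fin n) := fun q => {f (Sum.inl q.1), f (Sum.inr q.2)}
  have hg : Function.Injective g := by
    rintro ⟨a, b⟩ ⟨a', b'⟩ h
    have h1 : f (Sum.inl a) ∈ g (a', b') := by rw [← h]; simp [g]
    have h2 : f (Sum.inr b) ∈ g (a', b') := by rw [← h]; simp [g]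
    simp [g] at h1 h2
    rw [h1, h2]
  refine ⟨I.image g, ⟨?_, ?_⟩, card_image_of_injective _ hg⟩
  · intro e he
    obtain ⟨q, -, rfl⟩ := mem_image.1 he
    exact card_pair (by simp)
  · intro i _ hik S hS hSi
    obtain ⟨E, hEI, rfl⟩ := subset_image_iff.1 hS
    rw [card_image_of_injective _ hg] at hSi
    have h8 := card_le_of_card_le_eight E
      (fun a a' b b' h1 h2 h3 h4 => hI a a' b b' (hEI h1) (hEI h2) (hEI h3) (hEI h4)) (by omega)
    have hsub : ((E.image Prod.fst).disjSum (E.image Prod.snd)).map f ⊆ (E.image g).sup id := by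
      intro v hv
      obtain ⟨w, hw, rfl⟩ := mem_map.1 hv
      rw [mem_sup]
      rcases w with a | b
      · rw [inl_mem_disjSum] at hw
        obtain ⟨q, hq, rfl⟩ := mem_image.1 hw
        exact ⟨g q, mem_image_of_mem _ hq, by simp [g]⟩
      · rw [inr_mem_disjSum] at hw
        obtain ⟨q, hq, rfl⟩ := mem_image.1 hw
        exact ⟨g q, mem_image_of_mem _ hq, by simp [g]⟩
    have := card_le_card hsub
    rw [card_map, card_disjSum] at this
    omega

lemma exists_batchCode_prime {n k p : ℕ} (hk : k ≤ 8) (hp : p.Prime) (hpn : 2 * p ^ 2 ≤ n) :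
    ∃ F : Finset (Finset (Fin n)), IsBatchCode n 2 k F ∧ #F = p ^ 3 := by
  have : Fact p.Prime := ⟨hp⟩
  let P := ZMod p × ZMod p
  obtain ⟨f⟩ : Nonempty (P ⊕ P ↪ Fin n) := by
    refine Function.Embedding.nonempty_of_card_le ?_
    simp only [P, Fintype.card_sum, Fintype.card_prod, ZMod.card, Fintype.card_fin]
    nlinarith
  -- The flag with abscissa `x` on the line `y = s x + t`.
  let h : ZMod p × P → P × P := fun q => ((q.1, q.2.1 * q.1 + q.2.2), q.2)
  have hinj : Function.Injective h := by
    rintro ⟨x, l⟩ ⟨x', l'⟩ hh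
    simp only [h, Prod.mk.injEq] at hh ⊢
    exact ⟨congrArg Prod.fst hh.1, hh.2⟩
  obtain ⟨F, hF, hc⟩ := isBatchCode_of_bipartite hk f (univ.image h) (by
    have key : ∀ x y s t : ZMod p, ((x, y), (s, t)) ∈ univ.image h → y = s * x + t := by
      intro x y s t hm
      obtain ⟨⟨x', s', t'⟩, -, hq⟩ := mem_image.1 hm
      simp only [h, Prod.mk.injEq] at hq
      obtain ⟨⟨rfl, rfl⟩, rfl, rfl⟩ := hq
      rfl
    rintro ⟨x, y⟩ ⟨x', y'⟩ ⟨s, t⟩ ⟨s', t'⟩ h1 h2 h3 h4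
    have k1 := key _ _ _ _ h1
    have k2 := key _ _ _ _ h2
    have k3 := key _ _ _ _ h3
    have k4 := key _ _ _ _ h4
    have hz : (s - s') * (x - x') = 0 := by linear_combination k2 - k1 + k3 - k4
    rcases mul_eq_zero.1 hz with hs | hx
    · right
      have hs' : s = s' := sub_eq_zero.1 hs
      subst hs'
      have : t = t' := by linear_combination k3 - k1
      rw [this]
    · left
      have hx' : x = x' := sub_eq_zero.1 hx
      subst hx'
      rw [k1, k2])
  refine ⟨F, hF, ?_⟩
  rw [hc, card_image_of_injective _ hinj, card_univ]
  simp only [P, Fintype.card_prod, ZMod.card]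
  ring

lemma exists_prime_sq {n : ℕ} (hn : 8 ≤ n) : ∃ p : ℕ, p.Prime ∧ 2 * p ^ 2 ≤ n ∧ n ≤ 8 * p ^ 2 := by
  have hq0 : Nat.sqrt (n / 8) ≠ 0 := by
    have : 0 < Nat.sqrt (n / 8) := Nat.sqrt_pos.2 (by omega)
    omega
  obtain ⟨p, hp, hlt, hle⟩ := Nat.exists_prime_lt_and_le_two_mul _ hq0
  have h1 : Nat.sqrt (n / 8) ^ 2 ≤ n / 8 := Nat.sqrt_le' _
  have h2 : n / 8 < (Nat.sqrt (n / 8) + 1) ^ 2 := Nat.lt_succ_sqrt' _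
  have h3 : (Nat.sqrt (n / 8) + 1) ^ 2 ≤ p ^ 2 := Nat.pow_le_pow_left hlt 2
  have h4 : p ^ 2 ≤ (2 * Nat.sqrt (n / 8)) ^ 2 := Nat.pow_le_pow_left hle 2
  rw [mul_pow] at h4
  exact ⟨p, hp, by omega, by omega⟩

/-! ### The order of magnitude -/

/-- For `k = 6, 7, 8`, `m(n, 2, k) = Θ(n^(3/2))`. -/
theorem statement16 (k : ℕ) (hk₁ : 6 ≤ k) (hk₂ : k ≤ 8) :
    ∃ c₁ c₂ : ℝ, 0 < c₁ ∧ 0 < c₂ ∧ ∃ n₀ : ℕ, ∀ n : ℕ, n₀ ≤ n →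
      c₁ * (n : ℝ) ^ ((3 : ℝ) / 2) ≤ (m n 2 k : ℝ) ∧
        (m n 2 k : ℝ) ≤ c₂ * (n : ℝ) ^ ((3 : ℝ) / 2) := by
  -- Squaring removes the fractional exponent; `1 / 23` works because `8 ^ 3 < 23 ^ 2`.
  have hpow : ∀ n : ℕ, ((n : ℝ) ^ ((3 : ℝ) / 2)) ^ 2 = (n : ℝ) ^ 3 := by
    intro n
    rw [← Real.rpow_natCast, ← Real.rpow_mul (Nat.cast_nonneg n), ← Real.rpow_natCast]
    norm_num
  refine ⟨1 / 23, 2, by norm_num, by norm_num, 8, fun n hn => ⟨?_, ?_⟩⟩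
  · obtain ⟨p, hp, hpn, hnp⟩ := exists_prime_sq hn
    obtain ⟨F, hF, hFc⟩ := exists_batchCode_prime hk₂ hp hpn
    have hbdd : BddAbove {c : ℕ | ∃ F : Finset (Finset (Fin n)), IsBatchCode n 2 k F ∧ #F = c} := by
      refine ⟨Fintype.card (Finset (Fin n)), ?_⟩
      rintro c ⟨F, -, rfl⟩
      exact card_le_univ F
    have hm : p ^ 3 ≤ m n 2 k := le_csSup hbdd ⟨F, hF, hFc⟩
    have hm' : (p : ℝ) ^ 3 ≤ (m n 2 k : ℝ) := by exact_mod_cast hm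
    refine le_trans ?_ hm'
    refine le_of_sq_le_sq ?_ (by positivity)
    rw [mul_pow, hpow]
    have hnp' : (n : ℝ) ≤ 8 * (p : ℝ) ^ 2 := by exact_mod_cast hnp
    have h3 : (n : ℝ) ^ 3 ≤ (8 * (p : ℝ) ^ 2) ^ 3 := by gcongr
    have h6 : (0 : ℝ) ≤ (p : ℝ) ^ 6 := by positivity
    nlinarith
  · have hne : {c : ℕ | ∃ F : Finset (Finset (Fin n)), IsBatchCode n 2 k F ∧ #F = c}.Nonempty := by
      refine ⟨0, ∅, ⟨by simp, ?_⟩, by simp⟩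
      intro i hi _ S hS hSi
      rw [subset_empty.1 hS, card_empty] at hSi
      omega
    obtain ⟨F, hF, hFc⟩ := Nat.sSup_mem hne (by
      refine ⟨Fintype.card (Finset (Fin n)), ?_⟩
      rintro c ⟨F, -, rfl⟩
      exact card_le_univ F)
    have hm : m n 2 k ^ 2 ≤ 3 * n ^ 3 := by
      rw [m, ← hFc]
      exact card_sq_le hk₁ hF
    have hm' : (m n 2 k : ℝ) ^ 2 ≤ 3 * (n : ℝ) ^ 3 := by exact_mod_cast hm
    refine le_of_sq_le_sq ?_ (by positivity)
    rw [mul_pow, hpow]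
    have : (0 : ℝ) ≤ (n : ℝ) ^ 3 := by positivity
    linarith
end

section
/- Let F be a finite family of distinct finite sets. If some collection of i distinct members of F spans fewer than i vertices (i.e., the union of the i sets has cardinality less than i), then there exist j ≤ i and a subcollection of j distinct members of F whose union has cardinality exactly j - 1. -/
open Finset

/-- If some collection of `i` distinct members of a finite family `F` of finite sets
spans fewer than `i` vertices, then there are `j ≤ i` and a subcollection of `j`
distinct members of `F` whose union has cardinality exactly `j - 1`. -/
theorem statement17 {α : Type*} [DecidableEq α] (F : Finset (Finset α)) (i : ℕ)
    (h : ∃ S ⊆ F, S.card = i ∧ (S.sup id).card < i) :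
    ∃ j : ℕ, j ≤ i ∧ ∃ T ⊆ F, T.card = j ∧ (T.sup id).card + 1 = j := by
  induction i with
  | zero => obtain ⟨S, -, -, hlt⟩ := h; omega
  | succ n ih =>
    obtain ⟨S, hSF, hS, hlt⟩ := h
    obtain ⟨e, he⟩ : S.Nonempty := card_pos.mp (by omega)
    have hcard : (S.erase e).card = n := by rw [card_erase_of_mem he, hS]; rfl
    have hsub : S.erase e ⊆ F := (erase_subset e S).trans hSF
    have hle : ((S.erase e).sup id).card ≤ (S.sup id).card :=
      card_le_card (Finset.sup_mono (erase_subset e S))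
    by_cases hn : ((S.erase e).sup id).card < n
    · obtain ⟨j, hj, hT⟩ := ih ⟨S.erase e, hsub, hcard, hn⟩
      exact ⟨j, by omega, hT⟩
    · -- Here `n ≤ |⋃ (S \ {e})| ≤ |⋃ S| ≤ n`, so `S` itself spans exactly `n` vertices.
      exact ⟨n + 1, le_rfl, S, hSF, hS, by omega⟩
end
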